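/- arXiv:2305.13151 — 3 statements merged into one kernel-verified Lean document; each statement's English description precedes it below -/
import Mathlib

section
/- For all integers m ≥ 1 and n ≥ 1, p^{od}_{ed}(m,n) - p^{od}_{ed}(m,n-1) = D_o(m,n) - D_e(m,n-1) (an identity of integers). -/
/-- Number of partitions of `n` into exactly `m` distinct parts in which
every even part is smaller than every odd part. -/
noncomputable def podEd (m n : ℕ) : ℕ :=
  Nat.card {π : n.Partition // π.parts.Nodup ∧ Multiset.card π.parts = m ∧
    ∀ a ∈ π.parts, ∀ b ∈ π.parts, Even a → Odd b → a < b}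

/-- Number of partitions of `n` into exactly `m` distinct odd parts. -/
noncomputable def Dodd (m n : ℕ) : ℕ :=
  Nat.card {π : n.Partition // π.parts.Nodup ∧ Multiset.card π.parts = m ∧
    ∀ a ∈ π.parts, Odd a}

/-- Number of partitions of `n` into exactly `m` distinct even parts. -/
noncomputable def Deven (m n : ℕ) : ℕ :=
  Nat.card {π : n.Partition // π.parts.Nodup ∧ Multiset.card π.parts = m ∧
    ∀ a ∈ π.parts, Even a}

/-!
Call a finite set of positive integers separated if each even element is smaller than each odd
one. A separated set that is not all odd is `insert (a + 1) t` for a unique odd `a` such that `a`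
exceeds every even element of `t` and lies below every odd one: `a + 1` is its largest even element.
A separated set that is not all even is `insert a t` for a unique such pair, `a` being its smallest
odd element. Exchanging `a + 1` for `a` lowers the sum by one and keeps the number of elements, so
it matches the two kinds of sets, and only the all-odd and the all-even sets remain to be counted.
-/

open Finset

/-- The finite sets of `m` positive integers with sum `n`, which encode the partitions of `n` into
`m` distinct parts. -/
def distinctPartSets (m n : ℕ) : Set (Finset ℕ) :=
  {s | 0 ∉ s ∧ #s = m ∧ ∑ x ∈ s, x = n}

/-- A set of naturals is separated if its even elements are smaller than its odd elements; these are
the part sets counted by `podEd`. -/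
def IsSeparated (s : Finset ℕ) : Prop :=
  ∀ a ∈ s, ∀ b ∈ s, Even a → Odd b → a < b

/-- `c` is a parity cut of `t` if it lies strictly above the even elements of `t` and strictly below
the odd ones; `c` itself may have either parity. -/
def IsParityCut (c : ℕ) (t : Finset ℕ) : Prop :=
  ∀ x ∈ t, (Even x → x < c) ∧ (Odd x → c < x)

/-- The pairs of an odd number `a` and a set `t` cut by `a` for which `insert a t` has `m` positive
elements with sum `n`. They parametrize the separated sets with an odd element, and those with an
even element and sum `n + 1`. -/
def oddCutPairs (m n : ℕ) : Set (ℕ × Finset ℕ) :=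
  {p | Odd p.1 ∧ IsParityCut p.1 p.2 ∧ insert p.1 p.2 ∈ distinctPartSets m n}

theorem finite_distinctPartSets (m n : ℕ) : (distinctPartSets m n).Finite := by
  refine (range (n + 1)).powerset.finite_toSet.subset fun s hs ↦ ?_
  rw [mem_coe, mem_powerset]
  intro x hx
  have hxs : x ≤ ∑ y ∈ s, y := single_le_sum_of_canonicallyOrdered (f := id) hx
  rw [hs.2.2] at hxs
  exact mem_range_succ_iff.2 hxs

theorem natCard_distinct_partition_eq_ncard (m n : ℕ) (P : Multiset ℕ → Prop) :
    Nat.card {π : n.Partition // π.parts.Nodup ∧ Multiset.card π.parts = m ∧ P π.parts} =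
      {s ∈ distinctPartSets m n | P s.val}.ncard :=
  Nat.card_congr
    { toFun := fun π ↦ ⟨⟨π.1.parts, π.2.1⟩,
        ⟨fun h0 ↦ (π.1.parts_pos h0).false, π.2.2.1,
          (sum_val _).symm.trans π.1.parts_sum⟩, π.2.2.2⟩
      invFun := fun s ↦ ⟨⟨s.1.val, fun hi ↦ Nat.pos_of_ne_zero (ne_of_mem_of_not_mem hi s.2.1.1),
          (sum_val _).trans s.2.1.2.2⟩, s.1.nodup, s.2.1.2.1, s.2.2⟩
      left_inv := fun _ ↦ rfl
      right_inv := fun _ ↦ rfl }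

theorem podEd_eq_ncard (m n : ℕ) :
    podEd m n = {s ∈ distinctPartSets m n | IsSeparated s}.ncard :=
  natCard_distinct_partition_eq_ncard m n fun M ↦ ∀ a ∈ M, ∀ b ∈ M, Even a → Odd b → a < b

theorem dodd_eq_ncard (m n : ℕ) :
    Dodd m n = {s ∈ distinctPartSets m n | ∀ a ∈ s, Odd a}.ncard :=
  natCard_distinct_partition_eq_ncard m n fun M ↦ ∀ a ∈ M, Odd a

theorem deven_eq_ncard (m n : ℕ) :
    Deven m n = {s ∈ distinctPartSets m n | ∀ a ∈ s, Even a}.ncard :=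
  natCard_distinct_partition_eq_ncard m n fun M ↦ ∀ a ∈ M, Even a

theorem ncard_sep_eq_add_ncard_sep_not {α : Type*} {S : Set α} (hS : S.Finite) {P Q : α → Prop}
    (hPQ : ∀ x ∈ S, P x → Q x) :
    {x ∈ S | Q x}.ncard = {x ∈ S | P x}.ncard + {x ∈ S | Q x ∧ ¬ P x}.ncard := by
  have hdisj : Disjoint {x ∈ S | P x} {x ∈ S | Q x ∧ ¬ P x} :=
    Set.disjoint_left.2 fun _ hx hx' ↦ hx'.2.2 hx.2
  rw [← Set.ncard_union_eq hdisj (hS.sep _) (hS.sep _)]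
  congr 1
  ext x
  have := hPQ x
  simp only [Set.mem_union, Set.mem_ofPred_eq]
  tauto

theorem podEd_eq_dodd_add (m n : ℕ) :
    podEd m n = Dodd m n +
      {s ∈ distinctPartSets m n | IsSeparated s ∧ ∃ a ∈ s, Even a}.ncard := by
  have isSeparated_of_odd (s : Finset ℕ) (h : ∀ a ∈ s, Odd a) : IsSeparated s :=
    fun a ha _ _ hae _ ↦ absurd hae (Nat.not_even_iff_odd.2 (h a ha))
  rw [podEd_eq_ncard, dodd_eq_ncard, ncard_sep_eq_add_ncard_sep_not (finite_distinctPartSets m n)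
    fun s _ ↦ isSeparated_of_odd s]
  simp only [not_forall, exists_prop, Nat.not_odd_iff_even]

theorem podEd_eq_deven_add (m n : ℕ) :
    podEd m n = Deven m n +
      {s ∈ distinctPartSets m n | IsSeparated s ∧ ∃ a ∈ s, Odd a}.ncard := by
  have isSeparated_of_even (s : Finset ℕ) (h : ∀ a ∈ s, Even a) : IsSeparated s :=
    fun _ _ b hb _ hbo ↦ absurd hbo (Nat.not_odd_iff_even.2 (h b hb))
  rw [podEd_eq_ncard, deven_eq_ncard, ncard_sep_eq_add_ncard_sep_not (finite_distinctPartSets m n)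
    fun s _ ↦ isSeparated_of_even s]
  simp only [not_forall, exists_prop, Nat.not_even_iff_odd]

namespace IsParityCut

variable {a c d : ℕ} {t u : Finset ℕ}

theorem notMem (h : IsParityCut c t) : c ∉ t := fun hc ↦
  (Nat.even_or_odd c).elim (fun he ↦ ((h c hc).1 he).false) fun ho ↦ ((h c hc).2 ho).false

theorem isSeparated_insert (h : IsParityCut c t) : IsSeparated (insert c t) := by
  intro x hx y hy hxe hyo
  rcases mem_insert.1 hx with rfl | hxt <;> rcases mem_insert.1 hy with rfl | hyt
  · exact absurd hxe (Nat.not_even_iff_odd.2 hyo)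
  · exact (h y hyt).2 hyo
  · exact (h x hxt).1 hxe
  · exact ((h x hxt).1 hxe).trans ((h y hyt).2 hyo)

theorem succ_iff (ha : Odd a) : IsParityCut (a + 1) t ↔ IsParityCut a t := by
  refine forall₂_congr fun x _ ↦ ?_
  grind

theorem eq_and_eq_of_insert_eq (hc : IsParityCut c t) (hd : IsParityCut d u)
    (hpar : Even c ↔ Even d) (h : insert c t = insert d u) : c = d ∧ t = u := by
  have hcu : c = d ∨ c ∈ u := mem_insert.1 (h ▸ mem_insert_self c t)
  have hdt : d = c ∨ d ∈ t := mem_insert.1 (h ▸ mem_insert_self d u)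
  -- Otherwise `c ∈ u` and `d ∈ t`; as the parities agree, the two cuts give `c < d` and `d < c`.
  obtain rfl : c = d := by grind [IsParityCut]
  refine ⟨rfl, ?_⟩
  rw [← erase_insert hc.notMem, h, erase_insert hd.notMem]

theorem insert_succ_mem_distinctPartSets_iff {m n : ℕ} (ha : Odd a) (h : IsParityCut a t) :
    insert (a + 1) t ∈ distinctPartSets m (n + 1) ↔ insert a t ∈ distinctPartSets m n := by
  have hsucc : a + 1 ∉ t := ((succ_iff ha).2 h).notMem
  simp only [distinctPartSets, Set.mem_ofPred_eq, mem_insert, card_insert_of_notMem h.notMem,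
    card_insert_of_notMem hsucc, sum_insert h.notMem, sum_insert hsucc]
  have := ha.pos
  grind

end IsParityCut

namespace IsSeparated

variable {s : Finset ℕ}

theorem exists_even_isParityCut (hs : IsSeparated s) (h : ∃ x ∈ s, Even x) :
    ∃ c ∈ s, Even c ∧ IsParityCut c (s.erase c) := by
  obtain ⟨c, hc, hmax⟩ := exists_max_image {x ∈ s | Even x} id (filter_nonempty_iff.2 h)
  obtain ⟨hcs, hce⟩ := mem_filter.1 hc
  refine ⟨c, hcs, hce, fun x hx ↦ ?_⟩
  obtain ⟨hxc, hxs⟩ := mem_erase.1 hx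
  exact ⟨fun hxe ↦ (hmax x (mem_filter.2 ⟨hxs, hxe⟩)).lt_of_ne hxc, hs c hcs x hxs hce⟩

theorem exists_odd_isParityCut (hs : IsSeparated s) (h : ∃ x ∈ s, Odd x) :
    ∃ c ∈ s, Odd c ∧ IsParityCut c (s.erase c) := by
  obtain ⟨c, hc, hmin⟩ := exists_min_image {x ∈ s | Odd x} id (filter_nonempty_iff.2 h)
  obtain ⟨hcs, hco⟩ := mem_filter.1 hc
  refine ⟨c, hcs, hco, fun x hx ↦ ?_⟩
  obtain ⟨hxc, hxs⟩ := mem_erase.1 hx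
  exact ⟨fun hxe ↦ hs x hxs c hcs hxe hco,
    fun hxo ↦ (hmin x (mem_filter.2 ⟨hxs, hxo⟩)).lt_of_ne' hxc⟩

end IsSeparated

theorem bijOn_insert_oddCutPairs (m n : ℕ) :
    Set.BijOn (fun p ↦ insert p.1 p.2) (oddCutPairs m n)
      {s ∈ distinctPartSets m n | IsSeparated s ∧ ∃ a ∈ s, Odd a} := by
  refine ⟨?_, ?_, ?_⟩
  · rintro ⟨a, t⟩ ⟨ha, hcut, hmem⟩
    exact ⟨hmem, hcut.isSeparated_insert, a, mem_insert_self a t, ha⟩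
  · rintro ⟨a, t⟩ ⟨ha, hcut, -⟩ ⟨b, u⟩ ⟨hb, hcut', -⟩ h
    have hpar : Even a ↔ Even b := by simp only [Nat.not_even_iff_odd.2, ha, hb]
    exact Prod.ext_iff.2 (hcut.eq_and_eq_of_insert_eq hcut' hpar h)
  · rintro s ⟨hmem, hsep, hodd⟩
    obtain ⟨a, has, ha, hcut⟩ := hsep.exists_odd_isParityCut hodd
    have hinsert : insert a (s.erase a) = s := insert_erase has
    exact ⟨(a, s.erase a), ⟨ha, hcut, by rwa [hinsert]⟩, hinsert⟩

theorem bijOn_insert_succ_oddCutPairs (m n : ℕ) :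
    Set.BijOn (fun p ↦ insert (p.1 + 1) p.2) (oddCutPairs m n)
      {s ∈ distinctPartSets m (n + 1) | IsSeparated s ∧ ∃ a ∈ s, Even a} := by
  refine ⟨?_, ?_, ?_⟩
  · rintro ⟨a, t⟩ ⟨ha, hcut, hmem⟩
    exact ⟨(hcut.insert_succ_mem_distinctPartSets_iff ha).2 hmem,
      ((IsParityCut.succ_iff ha).2 hcut).isSeparated_insert,
      a + 1, mem_insert_self _ t, ha.add_one⟩
  · rintro ⟨a, t⟩ ⟨ha, hcut, -⟩ ⟨b, u⟩ ⟨hb, hcut', -⟩ h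
    have hpar : Even (a + 1) ↔ Even (b + 1) := iff_of_true ha.add_one hb.add_one
    obtain ⟨hab, htu⟩ := ((IsParityCut.succ_iff ha).2 hcut).eq_and_eq_of_insert_eq
      ((IsParityCut.succ_iff hb).2 hcut') hpar h
    exact Prod.ext (Nat.succ_injective hab) htu
  · rintro s ⟨hmem, hsep, heven⟩
    obtain ⟨c, hcs, hc, hcut⟩ := hsep.exists_even_isParityCut heven
    obtain ⟨a, rfl⟩ := Nat.exists_eq_succ_of_ne_zero (ne_of_mem_of_not_mem hcs hmem.1)
    have ha : Odd a := by simpa [Nat.even_add_one] using hc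
    have hcut' := (IsParityCut.succ_iff ha).1 hcut
    have hinsert : insert (a + 1) (s.erase (a + 1)) = s := insert_erase hcs
    refine ⟨(a, s.erase (a + 1)), ⟨ha, hcut', ?_⟩, hinsert⟩
    rwa [← hcut'.insert_succ_mem_distinctPartSets_iff ha, hinsert]

theorem ncard_isSeparated_exists_even_succ (m n : ℕ) :
    {s ∈ distinctPartSets m (n + 1) | IsSeparated s ∧ ∃ a ∈ s, Even a}.ncard =
      {s ∈ distinctPartSets m n | IsSeparated s ∧ ∃ a ∈ s, Odd a}.ncard :=
  (bijOn_insert_succ_oddCutPairs m n).ncard_eq.symm.trans (bijOn_insert_oddCutPairs m n).ncard_eq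

theorem podEd_diff (m n : ℕ) (hm : 1 ≤ m) (hn : 1 ≤ n) :
    (podEd m n : ℤ) - (podEd m (n - 1) : ℤ)
      = (Dodd m n : ℤ) - (Deven m (n - 1) : ℤ) := by
  obtain ⟨k, rfl⟩ := Nat.exists_eq_add_of_le' hn
  rw [Nat.add_sub_cancel, podEd_eq_dodd_add m (k + 1), podEd_eq_deven_add m k,
    ncard_isSeparated_exists_even_succ]
  push_cast
  ring
end

section
/- For all integers m ≥ 1 and n ≥ 1, p^{od}_{ed}(2m-1,2n) = p^{od}_{ed}(2m-1,2n-1). -/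
/-!
Let `c` be odd and let `u` be a set whose even elements lie below `c` and whose odd elements lie
above `c`. Then both `insert c u` and `insert (c + 1) u` have all their even elements below all
their odd ones, with `c` the least odd element of the first and `c + 1` the greatest even element
of the second. Hence raising the least odd part by one is a bijection, inverse to lowering the
greatest even part, between the separated sets of sum `n` that have an odd element and those of
sum `n + 1` that have an even element. If `n` and the number of parts are both odd, parity of the
sum forces such elements to exist.
-/

/-- The parity condition on the parts of the partitions counted by `podEd`, called *separated*
below. -/
def EvensBelowOdds (s : Finset ℕ) : Prop :=
  ∀ a ∈ s, ∀ b ∈ s, Even a → Odd b → a < b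

/-- The distinct parts, as a finite set, of a partition of `n` into `m` parts with every even part
smaller than every odd part: the partitions counted by `podEd m n`. -/
def separatedFinsets (m n : ℕ) : Set (Finset ℕ) :=
  {s | 0 ∉ s ∧ s.card = m ∧ ∑ i ∈ s, i = n ∧ EvensBelowOdds s}

/-- An odd number separating the even elements of `u`, below it, from the odd ones, above it.
It is not itself in `u`: it is the part that the bijection raises or lowers. -/
def IsParityPivot (u : Finset ℕ) (c : ℕ) : Prop :=
  Odd c ∧ ∀ a ∈ u, (Even a → a < c) ∧ (Odd a → c < a)

/-- Pairs of a set of `m - 1` positive integers and a pivot for it, of total sum `n`. They stand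
both for the separated sets with a chosen least odd part `c` and for those with a chosen greatest
even part `c + 1`. -/
def pivotPairs (m n : ℕ) : Set (Finset ℕ × ℕ) :=
  {p | IsParityPivot p.1 p.2 ∧ 0 ∉ p.1 ∧ p.1.card + 1 = m ∧ ∑ i ∈ p.1, i + p.2 = n}

theorem podEd_eq_ncard_separatedFinsets (m n : ℕ) :
    podEd m n = (separatedFinsets m n).ncard := by
  refine Nat.card_congr
    { toFun := fun π => ⟨⟨π.1.parts, π.2.1⟩, ?_, π.2.2.1, ?_, π.2.2.2⟩
      invFun := fun s => ⟨⟨s.1.val, ?_, ?_⟩, s.1.nodup, s.2.2.1, s.2.2.2.2⟩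
      left_inv := fun _ => rfl
      right_inv := fun _ => rfl }
  · exact fun h => (π.1.parts_pos h).false
  · exact (Finset.sum_val _).symm.trans π.1.parts_sum
  · exact fun hi => Nat.pos_of_ne_zero (ne_of_mem_of_not_mem hi s.2.1)
  · exact s.1.sum_val.trans s.2.2.2.1

section Parity

variable {ι : Type*} {s : Finset ι} {f : ι → ℕ}

theorem exists_odd_of_odd_sum (h : Odd (∑ i ∈ s, f i)) : ∃ i ∈ s, Odd (f i) := by
  contrapose! h
  simp only [Nat.not_odd_iff_even] at h ⊢
  exact s.even_sum _ h

theorem exists_even_of_even_sum (h : Even (∑ i ∈ s, f i)) (hcard : Odd s.card) :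
    ∃ i ∈ s, Even (f i) := by
  contrapose! h
  simp only [Nat.not_even_iff_odd] at h ⊢
  rwa [Finset.odd_sum_iff_odd_card_odd, Finset.filter_true_of_mem h]

end Parity

namespace IsParityPivot

variable {u : Finset ℕ} {c : ℕ}

theorem notMem (h : IsParityPivot u c) : c ∉ u :=
  fun hc => ((h.2 c hc).2 h.1).false

theorem succ_notMem (h : IsParityPivot u c) : c + 1 ∉ u :=
  fun hc => absurd ((h.2 _ hc).1 h.1.add_one) (by lia)

theorem le_of_odd_of_mem_insert {b : ℕ} (h : IsParityPivot u c) (hb : b ∈ insert c u)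
    (hodd : Odd b) : c ≤ b := by
  rcases Finset.mem_insert.1 hb with rfl | hb
  · exact le_rfl
  · exact ((h.2 b hb).2 hodd).le

theorem le_succ_of_even_of_mem_insert {a : ℕ} (h : IsParityPivot u c)
    (ha : a ∈ insert (c + 1) u) (heven : Even a) : a ≤ c + 1 := by
  rcases Finset.mem_insert.1 ha with rfl | ha
  · exact le_rfl
  · exact ((h.2 a ha).1 heven).le.trans c.le_succ

theorem evensBelowOdds_insert (h : IsParityPivot u c) : EvensBelowOdds (insert c u) := by
  intro a ha b hb heven hodd
  have hac : a ≠ c := fun hac => Nat.not_even_iff_odd.2 h.1 (hac ▸ heven)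
  exact ((h.2 a (Finset.mem_of_mem_insert_of_ne ha hac)).1 heven).trans_le
    (h.le_of_odd_of_mem_insert hb hodd)

theorem evensBelowOdds_insert_succ (h : IsParityPivot u c) :
    EvensBelowOdds (insert (c + 1) u) := by
  intro a ha b hb heven hodd
  have hbc : b ≠ c + 1 := fun hbc => Nat.not_even_iff_odd.2 hodd (hbc ▸ h.1.add_one)
  have hcb : c < b := (h.2 b (Finset.mem_of_mem_insert_of_ne hb hbc)).2 hodd
  have hac : a ≤ c + 1 := h.le_succ_of_even_of_mem_insert ha heven
  lia

end IsParityPivot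

namespace EvensBelowOdds

variable {s : Finset ℕ}

theorem exists_isParityPivot_erase (hs : EvensBelowOdds s) (hodd : ∃ b ∈ s, Odd b) :
    ∃ c ∈ s, IsParityPivot (s.erase c) c := by
  obtain ⟨c, ⟨hc, hc_odd⟩, hmin⟩ :
      ∃ c, (c ∈ s ∧ Odd c) ∧ ∀ b, b ∈ s ∧ Odd b → c ≤ b := by
    simpa only [Finset.mem_filter, id] using
      (s.filter Odd).exists_min_image id (Finset.filter_nonempty_iff.2 hodd)
  refine ⟨c, hc, hc_odd, fun a ha => ?_⟩
  obtain ⟨hac, ha⟩ := Finset.mem_erase.1 ha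
  exact ⟨fun h => hs a ha c hc h hc_odd, fun h => (hmin a ⟨ha, h⟩).lt_of_ne hac.symm⟩

theorem exists_isParityPivot_erase_succ (hs : EvensBelowOdds s) (h0 : 0 ∉ s)
    (heven : ∃ a ∈ s, Even a) :
    ∃ c, c + 1 ∈ s ∧ IsParityPivot (s.erase (c + 1)) c := by
  obtain ⟨d, ⟨hd, hd_even⟩, hmax⟩ :
      ∃ d, (d ∈ s ∧ Even d) ∧ ∀ a, a ∈ s ∧ Even a → a ≤ d := by
    simpa only [Finset.mem_filter, id] using
      (s.filter Even).exists_max_image id (Finset.filter_nonempty_iff.2 heven)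
  obtain ⟨c, rfl⟩ := Nat.exists_eq_succ_of_ne_zero (ne_of_mem_of_not_mem hd h0)
  have hc_odd : Odd c := by simpa only [Nat.even_add_one, Nat.not_even_iff_odd] using hd_even
  refine ⟨c, hd, hc_odd, fun a ha => ?_⟩
  obtain ⟨hac, ha⟩ := Finset.mem_erase.1 ha
  refine ⟨fun h => ?_, fun h => c.lt_succ_self.trans (hs _ hd a ha hd_even h)⟩
  have hac' : a ≠ c := fun hac' => Nat.not_even_iff_odd.2 hc_odd (hac' ▸ h)
  have := hmax a ⟨ha, h⟩
  lia

end EvensBelowOdds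

theorem bijOn_insert_pivotPairs (m n : ℕ) :
    Set.BijOn (fun p : Finset ℕ × ℕ => insert p.2 p.1) (pivotPairs m n)
      {s ∈ separatedFinsets m n | ∃ b ∈ s, Odd b} := by
  refine ⟨?_, ?_, ?_⟩
  · rintro ⟨u, c⟩ ⟨h, h0, hcard, hsum⟩
    refine ⟨⟨?_, ?_, ?_, h.evensBelowOdds_insert⟩, c, Finset.mem_insert_self c u, h.1⟩
    · simpa only [Finset.mem_insert, not_or] using And.intro h.1.pos.ne h0
    · rw [Finset.card_insert_of_notMem h.notMem, hcard]
    · rw [Finset.sum_insert h.notMem, add_comm, hsum]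
  · rintro ⟨u, c⟩ ⟨(hu : IsParityPivot u c), -⟩ ⟨v, d⟩ ⟨(hv : IsParityPivot v d), -⟩
      (heq : insert c u = insert d v)
    obtain rfl : c = d := le_antisymm
      (hu.le_of_odd_of_mem_insert (heq ▸ Finset.mem_insert_self d v) hv.1)
      (hv.le_of_odd_of_mem_insert (heq ▸ Finset.mem_insert_self c u) hu.1)
    obtain rfl : u = v := by
      rw [← Finset.erase_insert hu.notMem, heq, Finset.erase_insert hv.notMem]
    rfl
  · rintro s ⟨⟨h0, hcard, hsum, hs⟩, hodd⟩
    obtain ⟨c, hc, hpivot⟩ := hs.exists_isParityPivot_erase hodd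
    exact ⟨(s.erase c, c), ⟨hpivot, fun h => h0 (Finset.mem_of_mem_erase h),
      (Finset.card_erase_add_one hc).trans hcard, (Finset.sum_erase_add s _ hc).trans hsum⟩,
      Finset.insert_erase hc⟩

theorem bijOn_insert_succ_pivotPairs (m n : ℕ) :
    Set.BijOn (fun p : Finset ℕ × ℕ => insert (p.2 + 1) p.1) (pivotPairs m n)
      {s ∈ separatedFinsets m (n + 1) | ∃ a ∈ s, Even a} := by
  refine ⟨?_, ?_, ?_⟩
  · rintro ⟨u, c⟩ ⟨h, h0, hcard, hsum⟩
    refine ⟨⟨?_, ?_, ?_, h.evensBelowOdds_insert_succ⟩,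
      c + 1, Finset.mem_insert_self _ u, h.1.add_one⟩
    · simpa only [Finset.mem_insert, not_or] using And.intro c.succ_pos.ne h0
    · rw [Finset.card_insert_of_notMem h.succ_notMem, hcard]
    · rw [Finset.sum_insert h.succ_notMem, add_comm, ← add_assoc, hsum]
  · rintro ⟨u, c⟩ ⟨(hu : IsParityPivot u c), -⟩ ⟨v, d⟩ ⟨(hv : IsParityPivot v d), -⟩
      (heq : insert (c + 1) u = insert (d + 1) v)
    obtain rfl : c = d := Nat.succ_injective <| le_antisymm
      (hv.le_succ_of_even_of_mem_insert (heq ▸ Finset.mem_insert_self _ u) hu.1.add_one)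
      (hu.le_succ_of_even_of_mem_insert (heq ▸ Finset.mem_insert_self _ v) hv.1.add_one)
    obtain rfl : u = v := by
      rw [← Finset.erase_insert hu.succ_notMem, heq, Finset.erase_insert hv.succ_notMem]
    rfl
  · rintro s ⟨⟨h0, hcard, hsum, hs⟩, heven⟩
    obtain ⟨c, hc, hpivot⟩ := hs.exists_isParityPivot_erase_succ h0 heven
    refine ⟨(s.erase (c + 1), c), ⟨hpivot, fun h => h0 (Finset.mem_of_mem_erase h),
      (Finset.card_erase_add_one hc).trans hcard, Nat.succ_injective ?_⟩, Finset.insert_erase hc⟩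
    exact (Finset.sum_erase_add s (fun i => i) hc).trans hsum

theorem ncard_separatedFinsets_succ_even_mem (m n : ℕ) :
    {s ∈ separatedFinsets m (n + 1) | ∃ a ∈ s, Even a}.ncard =
      {s ∈ separatedFinsets m n | ∃ b ∈ s, Odd b}.ncard :=
  (bijOn_insert_succ_pivotPairs m n).ncard_eq.symm.trans (bijOn_insert_pivotPairs m n).ncard_eq

theorem podEd_succ_of_odd {m n : ℕ} (hm : Odd m) (hn : Odd n) :
    podEd m (n + 1) = podEd m n := by
  have hodd : {s ∈ separatedFinsets m n | ∃ b ∈ s, Odd b} = separatedFinsets m n :=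
    Set.sep_eq_self_iff_mem_true.2 fun _ ⟨_, _, hsum, _⟩ =>
      exists_odd_of_odd_sum (hsum ▸ hn)
  have heven : {s ∈ separatedFinsets m (n + 1) | ∃ a ∈ s, Even a} =
      separatedFinsets m (n + 1) :=
    Set.sep_eq_self_iff_mem_true.2 fun _ ⟨_, hcard, hsum, _⟩ =>
      exists_even_of_even_sum (hsum ▸ hn.add_one) (hcard ▸ hm)
  rw [podEd_eq_ncard_separatedFinsets, podEd_eq_ncard_separatedFinsets, ← heven, ← hodd,
    ncard_separatedFinsets_succ_even_mem]

theorem podEd_odd_parts_eq (m n : ℕ) (hm : 1 ≤ m) (hn : 1 ≤ n) :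
    podEd (2 * m - 1) (2 * n) = podEd (2 * m - 1) (2 * n - 1) := by
  have hm_odd : Odd (2 * m - 1) := Nat.Even.sub_odd (by lia) (even_two_mul m) odd_one
  have hn_odd : Odd (2 * n - 1) := Nat.Even.sub_odd (by lia) (even_two_mul n) odd_one
  rw [← podEd_succ_of_odd hm_odd hn_odd, Nat.sub_add_cancel (by lia)]
end

section
/- For all integers m ≥ 1 and n ≥ 1, p^{ed}_{od}(m,n) - p^{ed}_{od}(m,n-1) = D_e(m,n-1) + D_e(m-1,n-1) - D_o(m,n-1) (an identity of integers, with the convention D_e(0,k) = 1 if k = 0 and D_e(0,k) = 0 if k ≥ 1). -/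
/-- Number of partitions of `n` into exactly `m` distinct parts in which
every odd part is smaller than every even part and at least one odd part occurs. -/
noncomputable def pedOd (m n : ℕ) : ℕ :=
  Nat.card {π : n.Partition // π.parts.Nodup ∧ Multiset.card π.parts = m ∧
    (∀ a ∈ π.parts, ∀ b ∈ π.parts, Odd a → Even b → a < b) ∧
    (∃ a ∈ π.parts, Odd a)}

/-!
Call a finite set of natural numbers, possibly containing `0`, separated if its odd elements lie
below its even elements. Replacing the largest odd element `2c + 1` by `2c` is a bijection from the
separated sets with an odd element onto the separated sets with an even element; it keeps the
cardinality and lowers the sum by one. Hence `pedOd m n` counts the separated `m`-sets of sum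
`n - 1` with an even element. Those containing `0` become, on removing `0`, sets of `m - 1` positive
even numbers, counted by `Deven (m - 1) (n - 1)`. The separated sets of positive numbers are those
counted by `pedOd m (n - 1)` and the all-even ones; discarding the all-odd ones leaves those with an
even element, so there are `pedOd m (n - 1) + Deven m (n - 1) - Dodd m (n - 1)` of them.
-/

open Finset

/-- The number of `m`-element sets of natural numbers with sum `n` that satisfy `Q`: partitions
into distinct parts for which, unlike in `Nat.Partition`, `0` is allowed as a part. -/
noncomputable def countDistinct (Q : Finset ℕ → Prop) (m n : ℕ) : ℕ :=
  {s : Finset ℕ | Q s ∧ #s = m ∧ ∑ x ∈ s, x = n}.ncard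

lemma finite_setOf_sum_eq (n : ℕ) : {s : Finset ℕ | ∑ x ∈ s, x = n}.Finite := by
  refine (range (n + 1)).powerset.finite_toSet.subset fun s hs ↦ ?_
  rw [mem_coe, mem_powerset]
  intro x hx
  have hle : x ≤ ∑ y ∈ s, y := single_le_sum_of_canonicallyOrdered (f := fun y ↦ y) hx
  exact mem_range_succ_iff.2 (hle.trans_eq hs)

lemma countDistinct_eq_add (Q R : Finset ℕ → Prop) (m n : ℕ) :
    countDistinct Q m n =
      countDistinct (fun s ↦ Q s ∧ R s) m n + countDistinct (fun s ↦ Q s ∧ ¬ R s) m n := by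
  have hfin : {s : Finset ℕ | Q s ∧ #s = m ∧ ∑ x ∈ s, x = n}.Finite :=
    (finite_setOf_sum_eq n).subset fun s hs ↦ hs.2.2
  unfold countDistinct
  rw [← Set.ncard_inter_add_ncard_sdiff_eq_ncard _ {s | R s} hfin]
  congr 2 <;> ext s <;> simp only [Set.mem_ofPred_eq, Set.mem_inter_iff, Set.mem_sdiff] <;> tauto

lemma card_partition_eq_countDistinct (Q : Multiset ℕ → Prop) (m n : ℕ) :
    Nat.card {π : n.Partition // π.parts.Nodup ∧ Multiset.card π.parts = m ∧ Q π.parts} =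
      countDistinct (fun s ↦ 0 ∉ s ∧ Q s.val) m n := by
  refine Nat.card_congr
    { toFun := fun π ↦ ⟨⟨π.1.parts, π.2.1⟩, ⟨?_, π.2.2.2⟩, π.2.2.1, ?_⟩
      invFun := fun s ↦ ⟨⟨s.1.val, fun hi ↦ ?_, ?_⟩, s.1.nodup, s.2.2.1, s.2.1.2⟩
      left_inv := fun _ ↦ rfl
      right_inv := fun _ ↦ rfl }
  · exact fun h0 ↦ (π.1.parts_pos h0).false
  · simpa only [Finset.sum, Multiset.map_id'] using π.1.parts_sum
  · exact Nat.pos_of_ne_zero fun h0 ↦ s.2.1.1 (h0 ▸ hi)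
  · simpa only [Finset.sum, Multiset.map_id'] using s.2.2.2

lemma countDistinct_eq_ncard_of_bijOn_insert {α : Type*} {P : Set (α × Finset ℕ)} {a : α → ℕ}
    {Q : Finset ℕ → Prop} (ha : ∀ p ∈ P, a p.1 ∉ p.2)
    (hbij : Set.BijOn (fun p ↦ insert (a p.1) p.2) P {s | Q s}) (m n : ℕ) :
    countDistinct Q m n = {p ∈ P | #p.2 + 1 = m ∧ a p.1 + ∑ x ∈ p.2, x = n}.ncard := by
  rw [countDistinct, ← (hbij.injOn.mono (Set.sep_subset _ _)).ncard_image]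
  congr 1
  ext s
  constructor
  · rintro ⟨hs, hcard, hsum⟩
    obtain ⟨p, hp, rfl⟩ := hbij.surjOn hs
    rw [card_insert_of_notMem (ha p hp)] at hcard
    rw [sum_insert (ha p hp)] at hsum
    exact ⟨p, ⟨hp, hcard, hsum⟩, rfl⟩
  · rintro ⟨p, ⟨hp, hcard, hsum⟩, rfl⟩
    exact ⟨hbij.mapsTo hp, (card_insert_of_notMem (ha p hp)).trans hcard,
      (sum_insert (ha p hp)).trans hsum⟩

lemma countDistinct_and_zero_mem (Q : Finset ℕ → Prop) (m n : ℕ) :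
    countDistinct (fun s ↦ Q s ∧ 0 ∈ s) (m + 1) n =
      countDistinct (fun s ↦ 0 ∉ s ∧ Q (insert 0 s)) m n := by
  symm
  refine Set.ncard_congr (fun s _ ↦ insert 0 s) ?_ ?_ ?_
  · rintro s ⟨⟨h0, hQ⟩, hcard, hsum⟩
    exact ⟨⟨hQ, mem_insert_self 0 s⟩, by rw [card_insert_of_notMem h0, hcard],
      by rw [sum_insert h0, zero_add, hsum]⟩
  · rintro s t ⟨⟨hs, -⟩, -⟩ ⟨⟨ht, -⟩, -⟩ h
    rw [← erase_insert hs, h, erase_insert ht]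
  · rintro s ⟨⟨hQ, h0⟩, hcard, hsum⟩
    refine ⟨s.erase 0, ⟨⟨notMem_erase 0 s, by rwa [insert_erase h0]⟩, ?_, ?_⟩, insert_erase h0⟩
    · rw [card_erase_of_mem h0, hcard, Nat.add_sub_cancel]
    · rw [sum_erase s rfl, hsum]

/-- The separation condition on the parts of a partition: each odd part is smaller than each even
part. -/
def OddsLTEvens (s : Finset ℕ) : Prop :=
  ∀ a ∈ s, ∀ b ∈ s, Odd a → Even b → a < b

lemma OddsLTEvens.zero_notMem {s : Finset ℕ} (hs : OddsLTEvens s) (hodd : ∃ a ∈ s, Odd a) :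
    0 ∉ s := by
  obtain ⟨a, ha, hao⟩ := hodd
  exact fun h0 ↦ Nat.not_lt_zero a (hs a ha 0 h0 hao Even.zero)

lemma oddsLTEvens_and_not_exists_odd_iff {s : Finset ℕ} :
    (OddsLTEvens s ∧ ¬ ∃ a ∈ s, Odd a) ↔ ∀ a ∈ s, Even a := by
  unfold OddsLTEvens
  grind

lemma oddsLTEvens_and_not_exists_even_iff {s : Finset ℕ} :
    (OddsLTEvens s ∧ ¬ ∃ a ∈ s, Even a) ↔ ∀ a ∈ s, Odd a := by
  unfold OddsLTEvens
  grind

lemma oddsLTEvens_insert_zero_iff {s : Finset ℕ} :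
    OddsLTEvens (insert 0 s) ↔ ∀ a ∈ s, Even a := by
  refine ⟨fun h a ha ↦ Nat.not_odd_iff_even.1 fun hao ↦ ?_, fun h ↦ ?_⟩
  · exact h.zero_notMem ⟨a, mem_insert_of_mem ha, hao⟩ (mem_insert_self 0 s)
  · exact (oddsLTEvens_and_not_exists_odd_iff.2 (forall_mem_insert _ _ _ |>.2 ⟨Even.zero, h⟩)).1

/-- The set `t` leaves a gap at the pair `2c`, `2c + 1`, with its odd elements below the gap and its
even elements above it. Adding either number of the pair yields a separated set, in which it is the
smallest even or the largest odd element. -/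
def SplitsAt (c : ℕ) (t : Finset ℕ) : Prop :=
  (∀ a ∈ t, Odd a → a < 2 * c) ∧ ∀ b ∈ t, Even b → 2 * c + 1 < b

namespace SplitsAt

variable {c d : ℕ} {t : Finset ℕ}

lemma two_mul_notMem (h : SplitsAt c t) : 2 * c ∉ t :=
  fun hc ↦ absurd (h.2 _ hc (even_two_mul c)) (by lia)

lemma two_mul_add_one_notMem (h : SplitsAt c t) : 2 * c + 1 ∉ t :=
  fun hc ↦ absurd (h.1 _ hc (odd_two_mul_add_one c)) (by lia)

lemma oddsLTEvens_insert_two_mul (h : SplitsAt c t) : OddsLTEvens (insert (2 * c) t) := by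
  unfold SplitsAt at h
  unfold OddsLTEvens
  grind

lemma oddsLTEvens_insert_two_mul_add_one (h : SplitsAt c t) :
    OddsLTEvens (insert (2 * c + 1) t) := by
  unfold SplitsAt at h
  unfold OddsLTEvens
  grind

lemma le_of_two_mul_mem_insert (h : SplitsAt c t) (hd : 2 * d ∈ insert (2 * c) t) : c ≤ d := by
  rcases mem_insert.1 hd with heq | hmem
  · lia
  · have := h.2 _ hmem (even_two_mul d)
    lia

lemma le_of_two_mul_add_one_mem_insert (h : SplitsAt c t)
    (hd : 2 * d + 1 ∈ insert (2 * c + 1) t) : d ≤ c := by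
  rcases mem_insert.1 hd with heq | hmem
  · lia
  · have := h.1 _ hmem (odd_two_mul_add_one d)
    lia

end SplitsAt

lemma OddsLTEvens.splitsAt_erase_two_mul {s : Finset ℕ} {c : ℕ} (hs : OddsLTEvens s)
    (hc : 2 * c ∈ s) (hmin : ∀ b ∈ s, Even b → 2 * c ≤ b) : SplitsAt c (s.erase (2 * c)) := by
  refine ⟨fun a ha hao ↦ hs a (mem_of_mem_erase ha) _ hc hao (even_two_mul c), fun b hb hbe ↦ ?_⟩
  obtain ⟨hne, hbs⟩ := mem_erase.1 hb
  have := hmin b hbs hbe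
  grind

lemma OddsLTEvens.splitsAt_erase_two_mul_add_one {s : Finset ℕ} {c : ℕ} (hs : OddsLTEvens s)
    (hc : 2 * c + 1 ∈ s) (hmax : ∀ a ∈ s, Odd a → a ≤ 2 * c + 1) :
    SplitsAt c (s.erase (2 * c + 1)) := by
  refine ⟨fun a ha hao ↦ ?_,
    fun b hb hbe ↦ hs _ hc b (mem_of_mem_erase hb) (odd_two_mul_add_one c) hbe⟩
  obtain ⟨hne, has⟩ := mem_erase.1 ha
  have := hmax a has hao
  grind

lemma bijOn_insert_two_mul :
    Set.BijOn (fun p : ℕ × Finset ℕ ↦ insert (2 * p.1) p.2) {p | SplitsAt p.1 p.2}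
      {s | OddsLTEvens s ∧ ∃ a ∈ s, Even a} := by
  refine ⟨fun p hp ↦ ⟨hp.oddsLTEvens_insert_two_mul, 2 * p.1, mem_insert_self _ _,
    even_two_mul _⟩, ?_, ?_⟩
  · rintro ⟨c, t⟩ (ht : SplitsAt c t) ⟨d, u⟩ (hu : SplitsAt d u)
      (heq : insert (2 * c) t = insert (2 * d) u)
    obtain rfl : c = d := le_antisymm
      (ht.le_of_two_mul_mem_insert (heq ▸ mem_insert_self _ _))
      (hu.le_of_two_mul_mem_insert (heq ▸ mem_insert_self _ _))
    rw [← erase_insert ht.two_mul_notMem, heq, erase_insert hu.two_mul_notMem]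
  · rintro s ⟨hs, b, hb, hbe⟩
    obtain ⟨e, he, hmin⟩ := (s.filter Even).exists_min_image id ⟨b, mem_filter.2 ⟨hb, hbe⟩⟩
    obtain ⟨hes, hee⟩ := mem_filter.1 he
    obtain ⟨c, rfl⟩ := even_iff_exists_two_mul.1 hee
    exact ⟨(c, s.erase (2 * c)), hs.splitsAt_erase_two_mul hes
      fun b hb hbe ↦ hmin b (mem_filter.2 ⟨hb, hbe⟩), insert_erase hes⟩

lemma bijOn_insert_two_mul_add_one :
    Set.BijOn (fun p : ℕ × Finset ℕ ↦ insert (2 * p.1 + 1) p.2) {p | SplitsAt p.1 p.2}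
      {s | OddsLTEvens s ∧ ∃ a ∈ s, Odd a} := by
  refine ⟨fun p hp ↦ ⟨hp.oddsLTEvens_insert_two_mul_add_one, 2 * p.1 + 1, mem_insert_self _ _,
    odd_two_mul_add_one _⟩, ?_, ?_⟩
  · rintro ⟨c, t⟩ (ht : SplitsAt c t) ⟨d, u⟩ (hu : SplitsAt d u)
      (heq : insert (2 * c + 1) t = insert (2 * d + 1) u)
    obtain rfl : c = d := le_antisymm
      (hu.le_of_two_mul_add_one_mem_insert (heq ▸ mem_insert_self _ _))
      (ht.le_of_two_mul_add_one_mem_insert (heq ▸ mem_insert_self _ _))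
    rw [← erase_insert ht.two_mul_add_one_notMem, heq, erase_insert hu.two_mul_add_one_notMem]
  · rintro s ⟨hs, a, ha, hao⟩
    obtain ⟨o, ho, hmax⟩ := (s.filter Odd).exists_max_image id ⟨a, mem_filter.2 ⟨ha, hao⟩⟩
    obtain ⟨hos, hoo⟩ := mem_filter.1 ho
    obtain ⟨c, rfl⟩ := hoo
    exact ⟨(c, s.erase (2 * c + 1)), hs.splitsAt_erase_two_mul_add_one hos
      fun a ha hao ↦ hmax a (mem_filter.2 ⟨ha, hao⟩), insert_erase hos⟩

lemma countDistinct_exists_odd_succ (m n : ℕ) :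
    countDistinct (fun s ↦ OddsLTEvens s ∧ ∃ a ∈ s, Odd a) m (n + 1) =
      countDistinct (fun s ↦ OddsLTEvens s ∧ ∃ a ∈ s, Even a) m n := by
  rw [countDistinct_eq_ncard_of_bijOn_insert (a := fun c ↦ 2 * c + 1)
      (fun _ ↦ SplitsAt.two_mul_add_one_notMem) bijOn_insert_two_mul_add_one,
    countDistinct_eq_ncard_of_bijOn_insert (a := fun c ↦ 2 * c)
      (fun _ ↦ SplitsAt.two_mul_notMem) bijOn_insert_two_mul]
  simp only [add_right_comm _ 1, Nat.add_right_cancel_iff]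

lemma pedOd_eq_countDistinct (m n : ℕ) :
    pedOd m n = countDistinct (fun s ↦ OddsLTEvens s ∧ ∃ a ∈ s, Odd a) m n := by
  refine (card_partition_eq_countDistinct
    (fun t ↦ (∀ a ∈ t, ∀ b ∈ t, Odd a → Even b → a < b) ∧ ∃ a ∈ t, Odd a) m n).trans ?_
  congr with s
  exact and_iff_right_of_imp fun h ↦ OddsLTEvens.zero_notMem h.1 h.2

lemma dodd_eq_countDistinct (m n : ℕ) :
    Dodd m n = countDistinct (fun s ↦ 0 ∉ s ∧ ∀ a ∈ s, Odd a) m n :=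
  card_partition_eq_countDistinct (fun t ↦ ∀ a ∈ t, Odd a) m n

lemma deven_eq_countDistinct (m n : ℕ) :
    Deven m n = countDistinct (fun s ↦ 0 ∉ s ∧ ∀ a ∈ s, Even a) m n :=
  card_partition_eq_countDistinct (fun t ↦ ∀ a ∈ t, Even a) m n

lemma countDistinct_oddsLTEvens_eq_pedOd_add_deven (m n : ℕ) :
    countDistinct (fun s ↦ 0 ∉ s ∧ OddsLTEvens s) m n = pedOd m n + Deven m n := by
  rw [countDistinct_eq_add _ (fun s ↦ ∃ a ∈ s, Odd a), pedOd_eq_countDistinct,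
    deven_eq_countDistinct]
  simp only [and_assoc, oddsLTEvens_and_not_exists_odd_iff]
  congr! 3 with s
  exact and_iff_right_of_imp fun h ↦ h.1.zero_notMem h.2

lemma countDistinct_oddsLTEvens_eq_add_dodd (m n : ℕ) :
    countDistinct (fun s ↦ 0 ∉ s ∧ OddsLTEvens s) m n =
      countDistinct (fun s ↦ 0 ∉ s ∧ OddsLTEvens s ∧ ∃ a ∈ s, Even a) m n + Dodd m n := by
  rw [countDistinct_eq_add _ (fun s ↦ ∃ a ∈ s, Even a), dodd_eq_countDistinct]
  simp only [and_assoc, oddsLTEvens_and_not_exists_even_iff]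

lemma countDistinct_exists_even_succ (m n : ℕ) :
    countDistinct (fun s ↦ OddsLTEvens s ∧ ∃ a ∈ s, Even a) (m + 1) n =
      Deven m n + countDistinct (fun s ↦ 0 ∉ s ∧ OddsLTEvens s ∧ ∃ a ∈ s, Even a) (m + 1) n := by
  have heven (s : Finset ℕ) : ∃ a ∈ insert 0 s, Even a := ⟨0, mem_insert_self 0 s, Even.zero⟩
  rw [countDistinct_eq_add _ (fun s ↦ 0 ∈ s), countDistinct_and_zero_mem, deven_eq_countDistinct]
  simp only [oddsLTEvens_insert_zero_iff, heven, and_true, and_comm (b := 0 ∉ _)]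

theorem pedOd_diff (m n : ℕ) (hm : 1 ≤ m) (hn : 1 ≤ n) :
    (pedOd m n : ℤ) - (pedOd m (n - 1) : ℤ)
      = (Deven m (n - 1) : ℤ) + (Deven (m - 1) (n - 1) : ℤ) - (Dodd m (n - 1) : ℤ) := by
  obtain ⟨m, rfl⟩ := Nat.exists_eq_add_of_le' hm
  obtain ⟨n, rfl⟩ := Nat.exists_eq_add_of_le' hn
  simp only [Nat.add_sub_cancel]
  have hshift : pedOd (m + 1) (n + 1) =
      countDistinct (fun s ↦ OddsLTEvens s ∧ ∃ a ∈ s, Even a) (m + 1) n := by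
    rw [pedOd_eq_countDistinct, countDistinct_exists_odd_succ]
  have hzero := countDistinct_exists_even_succ m n
  have hodd := countDistinct_oddsLTEvens_eq_pedOd_add_deven (m + 1) n
  have heven := countDistinct_oddsLTEvens_eq_add_dodd (m + 1) n
  lia
end
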